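/- arXiv:2503.21224 — 4 statements merged into one kernel-verified Lean document; each statement's English description precedes it below -/
import Mathlib

section
/- Let α ≤ β be real constants and let Q₁, Q₂ : 𝒮 × 𝒜 → ℝ be bounded measurable functions with α ≤ Q₁(s,a) ≤ β and α ≤ Q₂(s,a) ≤ β for all (s,a). Then for every s ∈ 𝒮, |TQ₁(s) − TQ₂(s)| ≤ exp((β − α)/τ) · ∫_𝒜 |Q₁(s,a) − Q₂(s,a)| μ(da). -/
open MeasureTheory

/-!
On `[α, β]` the integrands `exp (-Qᵢ / τ)` take values in `[exp (-β / τ), exp (-α / τ)]`.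
Hence `exp` contributes the Lipschitz constant `exp (-α / τ)`, `log` contributes the reciprocal
of the lower bound `exp (-β / τ)` for the integrals, and the product of the two constants is
`exp ((β - α) / τ)`; the factors `τ` and `τ⁻¹` cancel.
-/

theorem abs_exp_sub_exp_le {b x y : ℝ} (hx : x ≤ b) (hy : y ≤ b) :
    |Real.exp x - Real.exp y| ≤ Real.exp b * |x - y| :=
  (convex_Iic b).norm_image_sub_le_of_norm_deriv_le
    (fun _ _ => Real.differentiableAt_exp)
    (fun z hz => by simpa using hz) hy hx

theorem abs_log_sub_log_le {m x y : ℝ} (hm : 0 < m) (hx : m ≤ x) (hy : m ≤ y) :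
    |Real.log x - Real.log y| ≤ |x - y| / m := by
  have norm_deriv_le : ∀ z ∈ Set.Ici m, ‖deriv Real.log z‖ ≤ m⁻¹ := fun z hz => by
    rw [Real.deriv_log, norm_inv, Real.norm_of_nonneg (hm.le.trans hz)]
    exact inv_anti₀ hm hz
  rw [div_eq_inv_mul]
  exact (convex_Ici m).norm_image_sub_le_of_norm_deriv_le
    (fun z hz => Real.differentiableAt_log (hm.trans_le hz).ne') norm_deriv_le hy hx

section LogIntegralExp

variable {A : Type*} [MeasurableSpace A] {μ : Measure A} {a b : ℝ} {u v : A → ℝ}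

theorem abs_integral_exp_sub_integral_exp_le
    (hu : Integrable (fun x => Real.exp (u x)) μ) (hv : Integrable (fun x => Real.exp (v x)) μ)
    (huv : Integrable (fun x => u x - v x) μ)
    (hub : ∀ᵐ x ∂μ, u x ≤ b) (hvb : ∀ᵐ x ∂μ, v x ≤ b) :
    |∫ x, Real.exp (u x) ∂μ - ∫ x, Real.exp (v x) ∂μ| ≤
      Real.exp b * ∫ x, |u x - v x| ∂μ := by
  rw [← integral_sub hu hv, ← integral_const_mul, ← Real.norm_eq_abs]
  refine norm_integral_le_of_norm_le (huv.abs.const_mul _) ?_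
  filter_upwards [hub, hvb] with x hux hvx using abs_exp_sub_exp_le hux hvx

theorem exp_mul_measureReal_univ_le_integral_exp [IsFiniteMeasure μ]
    (hu : Integrable (fun x => Real.exp (u x)) μ) (hau : ∀ᵐ x ∂μ, a ≤ u x) :
    Real.exp a * μ.real Set.univ ≤ ∫ x, Real.exp (u x) ∂μ :=
  calc Real.exp a * μ.real Set.univ = ∫ _, Real.exp a ∂μ := by
        rw [integral_const, smul_eq_mul, mul_comm]
    _ ≤ ∫ x, Real.exp (u x) ∂μ :=
        integral_mono_ae (integrable_const _) hu (hau.mono fun _ => Real.exp_le_exp.2)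

theorem abs_log_integral_exp_sub_log_integral_exp_le [IsFiniteMeasure μ] [NeZero μ]
    (hu : AEMeasurable u μ) (hv : AEMeasurable v μ)
    (hu_mem : ∀ᵐ x ∂μ, u x ∈ Set.Icc a b) (hv_mem : ∀ᵐ x ∂μ, v x ∈ Set.Icc a b) :
    |Real.log (∫ x, Real.exp (u x) ∂μ) - Real.log (∫ x, Real.exp (v x) ∂μ)| ≤
      Real.exp (b - a) * ⨍ x, |u x - v x| ∂μ := by
  have integrable_exp {w : A → ℝ} (hw : AEMeasurable w μ) (hw_mem : ∀ᵐ x ∂μ, w x ∈ Set.Icc a b) :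
      Integrable (fun x => Real.exp (w x)) μ := by
    simpa only [one_mul] using
      ProbabilityTheory.integrable_exp_mul_of_mem_Icc (t := 1) hw hw_mem
  have integrable_sub : Integrable (fun x => u x - v x) μ :=
    (Integrable.of_mem_Icc a b hu hu_mem).sub (Integrable.of_mem_Icc a b hv hv_mem)
  have lower_pos : 0 < Real.exp a * μ.real Set.univ :=
    mul_pos (Real.exp_pos a) measureReal_univ_pos
  calc |Real.log (∫ x, Real.exp (u x) ∂μ) - Real.log (∫ x, Real.exp (v x) ∂μ)|
      ≤ |∫ x, Real.exp (u x) ∂μ - ∫ x, Real.exp (v x) ∂μ| / (Real.exp a * μ.real Set.univ) :=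
        abs_log_sub_log_le lower_pos
          (exp_mul_measureReal_univ_le_integral_exp (integrable_exp hu hu_mem)
            (hu_mem.mono fun _ => And.left))
          (exp_mul_measureReal_univ_le_integral_exp (integrable_exp hv hv_mem)
            (hv_mem.mono fun _ => And.left))
    _ ≤ (Real.exp b * ∫ x, |u x - v x| ∂μ) / (Real.exp a * μ.real Set.univ) := by
        gcongr
        exact abs_integral_exp_sub_integral_exp_le (integrable_exp hu hu_mem)
          (integrable_exp hv hv_mem) integrable_sub
          (hu_mem.mono fun _ => And.right) (hv_mem.mono fun _ => And.right)
    _ = Real.exp (b - a) * ⨍ x, |u x - v x| ∂μ := by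
        rw [average_eq, smul_eq_mul, Real.exp_sub, mul_div_mul_comm, div_eq_inv_mul (∫ _, _ ∂μ)]

end LogIntegralExp

theorem stmt_1_general {A : Type*} [MeasurableSpace A] (μ : Measure A) [IsFiniteMeasure μ]
    [NeZero μ] {τ α β : ℝ} (hτ : 0 < τ) {f g : A → ℝ}
    (hf : AEMeasurable f μ) (hg : AEMeasurable g μ)
    (hf_mem : ∀ᵐ x ∂μ, f x ∈ Set.Icc α β) (hg_mem : ∀ᵐ x ∂μ, g x ∈ Set.Icc α β) :
    |(-τ * Real.log (∫ x, Real.exp (-f x / τ) ∂μ)) -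
      (-τ * Real.log (∫ x, Real.exp (-g x / τ) ∂μ))| ≤
      Real.exp ((β - α) / τ) * ⨍ x, |f x - g x| ∂μ := by
  have rescale_mem {y : ℝ} (hy : y ∈ Set.Icc α β) : -y / τ ∈ Set.Icc (-β / τ) (-α / τ) :=
    ⟨by gcongr; exact hy.2, by gcongr; exact hy.1⟩
  have log_bound := abs_log_integral_exp_sub_log_integral_exp_le
    (hf.neg.div_const τ) (hg.neg.div_const τ)
    (hf_mem.mono fun _ => rescale_mem) (hg_mem.mono fun _ => rescale_mem)
  have exponent_eq : -α / τ - -β / τ = (β - α) / τ := by ring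
  have abs_sub_rescale (x : A) : |-f x / τ - -g x / τ| = τ⁻¹ * |f x - g x| := by
    rw [← sub_div, neg_sub_neg, abs_div, abs_of_pos hτ, abs_sub_comm, div_eq_inv_mul]
  simp only [Pi.neg_apply, exponent_eq, abs_sub_rescale, average_eq, integral_const_mul,
    smul_eq_mul] at log_bound
  rw [← mul_sub, abs_mul, abs_neg, abs_of_pos hτ, average_eq, smul_eq_mul]
  refine (mul_le_mul_of_nonneg_left log_bound hτ.le).trans_eq ?_
  field_simp

/-- **Lipschitz property of the soft-Bellman operator with respect to the reference
measure.** For bounded measurable `Q₁, Q₂` with values in `[α, β]`,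
`|TQ₁(s) - TQ₂(s)| ≤ exp((β-α)/τ) ∫ |Q₁(s,a) - Q₂(s,a)| dμ(a)`, where
`TQ(s) = -τ log ∫ exp(-Q(s,a)/τ) dμ(a)`. -/
theorem stmt_1 {S A : Type*} [MeasurableSpace S] [MeasurableSpace A]
    (μ : Measure A) [IsProbabilityMeasure μ]
    (τ α β : ℝ) (hτ : 0 < τ) (hαβ : α ≤ β)
    (Q₁ Q₂ : S × A → ℝ) (hQ₁ : Measurable Q₁) (hQ₂ : Measurable Q₂)
    (hQ₁l : ∀ p, α ≤ Q₁ p) (hQ₁u : ∀ p, Q₁ p ≤ β)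
    (hQ₂l : ∀ p, α ≤ Q₂ p) (hQ₂u : ∀ p, Q₂ p ≤ β)
    (s : S) :
    |(-τ * Real.log (∫ a, Real.exp (-Q₁ (s, a) / τ) ∂μ)) -
      (-τ * Real.log (∫ a, Real.exp (-Q₂ (s, a) / τ) ∂μ))| ≤
      Real.exp ((β - α) / τ) * ∫ a, |Q₁ (s, a) - Q₂ (s, a)| ∂μ := by
  simpa only [average_eq_integral, Function.comp_apply] using stmt_1_general μ hτ
    (hQ₁.comp measurable_prodMk_left).aemeasurable (hQ₂.comp measurable_prodMk_left).aemeasurable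
    (.of_forall fun a => ⟨hQ₁l (s, a), hQ₁u (s, a)⟩)
    (.of_forall fun a => ⟨hQ₂l (s, a), hQ₂u (s, a)⟩)
end

section
/- Let τ > 0, let α ≤ β be real constants, let K be a positive integer, and let q₁,…,q_K and r₁,…,r_K be real numbers all lying in [α, β]. Then |−τ · log((1/K) Σ_{k=1}^{K} exp(−q_k/τ)) + τ · log((1/K) Σ_{k=1}^{K} exp(−r_k/τ))| ≤ exp((β − α)/τ) · (1/K) Σ_{k=1}^{K} |q_k − r_k|. -/
/-!
The soft minimum is concave, and its gradient at `r` is the Gibbs distribution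
`p i ∝ w i * exp (-r i / τ)`. Hence the soft minimum at `q` exceeds the one at `r` by at most
`∑ p i * (q i - r i)`. If the values of `r` differ by at most `δ`, then the Gibbs distribution has
density at most `exp (δ / τ)` with respect to the probability weights `w`, so this excess is at most
`exp (δ / τ) * ∑ w i * |q i - r i|`; exchanging `q` and `r` bounds the absolute value.
-/

open Finset Real

/-- The partition function of the energies `q` at temperature `τ`, for the weights `w` on the
finite set `s`; it is the normalizing constant of `gibbsWeight`. -/
noncomputable def partitionFunction {ι : Type*} (s : Finset ι) (w : ι → ℝ) (τ : ℝ) (q : ι → ℝ) :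
    ℝ :=
  ∑ i ∈ s, w i * exp (-q i / τ)

/-- The soft minimum of `q` at temperature `τ`, for the weights `w` on the finite set `s`. The plain
Monte Carlo approximation is the case of uniform weights of total mass one. -/
noncomputable def softMin {ι : Type*} (s : Finset ι) (w : ι → ℝ) (τ : ℝ) (q : ι → ℝ) : ℝ :=
  -τ * log (partitionFunction s w τ q)

/-- The Gibbs distribution of the energies `q` at temperature `τ`, for the reference weights `w` on
the finite set `s`; it is the gradient of `softMin s w τ` at `q`. -/
noncomputable def gibbsWeight {ι : Type*} (s : Finset ι) (w : ι → ℝ) (τ : ℝ) (q : ι → ℝ) (i : ι) :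
    ℝ :=
  w i * exp (-q i / τ) / partitionFunction s w τ q

section

variable {ι : Type*} {s : Finset ι} {w : ι → ℝ} {τ δ : ℝ} {q r : ι → ℝ}

theorem partitionFunction_pos (hw : ∀ i ∈ s, 0 ≤ w i) (hw_sum : 0 < ∑ i ∈ s, w i) :
    0 < partitionFunction s w τ q := by
  obtain ⟨i, hi, hwi⟩ : ∃ i ∈ s, 0 < w i := (sum_pos_iff_of_nonneg hw).1 hw_sum
  exact sum_pos' (fun j hj ↦ mul_nonneg (hw j hj) (exp_pos _).le)
    ⟨i, hi, mul_pos hwi (exp_pos _)⟩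

theorem gibbsWeight_nonneg (hw : ∀ i ∈ s, 0 ≤ w i) {i : ι} (hi : i ∈ s) :
    0 ≤ gibbsWeight s w τ q i :=
  div_nonneg (mul_nonneg (hw i hi) (exp_pos _).le)
    (sum_nonneg fun j hj ↦ mul_nonneg (hw j hj) (exp_pos _).le)

theorem sum_gibbsWeight (hw : ∀ i ∈ s, 0 ≤ w i) (hw_sum : 0 < ∑ i ∈ s, w i) :
    ∑ i ∈ s, gibbsWeight s w τ q i = 1 := by
  simp only [gibbsWeight, ← sum_div]
  exact div_self (partitionFunction_pos hw hw_sum).ne'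

theorem sum_gibbsWeight_mul_exp :
    ∑ i ∈ s, gibbsWeight s w τ r i * exp (-(q i - r i) / τ) =
      partitionFunction s w τ q / partitionFunction s w τ r :=
  calc ∑ i ∈ s, gibbsWeight s w τ r i * exp (-(q i - r i) / τ)
      = ∑ i ∈ s, w i * exp (-q i / τ) / partitionFunction s w τ r := sum_congr rfl fun i _ ↦ by
        have hexp : exp (-r i / τ) * exp (-(q i - r i) / τ) = exp (-q i / τ) := by
          rw [← exp_add]
          ring_nf
        rw [gibbsWeight, div_mul_eq_mul_div, mul_assoc, hexp]
    _ = partitionFunction s w τ q / partitionFunction s w τ r := (sum_div _ _ _).symm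

theorem softMin_sub_le_sum_gibbsWeight_mul (hτ : 0 < τ) (hw : ∀ i ∈ s, 0 ≤ w i)
    (hw_sum : 0 < ∑ i ∈ s, w i) :
    softMin s w τ q - softMin s w τ r ≤ ∑ i ∈ s, gibbsWeight s w τ r i * (q i - r i) := by
  have hZq : 0 < partitionFunction s w τ q := partitionFunction_pos hw hw_sum
  have hZr : 0 < partitionFunction s w τ r := partitionFunction_pos hw hw_sum
  have jensen : exp (∑ i ∈ s, gibbsWeight s w τ r i * (-(q i - r i) / τ)) ≤
      partitionFunction s w τ q / partitionFunction s w τ r := by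
    rw [← sum_gibbsWeight_mul_exp]
    exact convexOn_exp.map_sum_le (fun i hi ↦ gibbsWeight_nonneg hw hi)
      (sum_gibbsWeight hw hw_sum) fun i _ ↦ Set.mem_univ _
  have hlog := (le_log_iff_exp_le (div_pos hZq hZr)).2 jensen
  rw [log_div hZq.ne' hZr.ne'] at hlog
  calc softMin s w τ q - softMin s w τ r
      = -τ * (log (partitionFunction s w τ q) - log (partitionFunction s w τ r)) :=
        (mul_sub _ _ _).symm
    _ ≤ -τ * ∑ i ∈ s, gibbsWeight s w τ r i * (-(q i - r i) / τ) :=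
        mul_le_mul_of_nonpos_left hlog (neg_nonpos.2 hτ.le)
    _ = ∑ i ∈ s, gibbsWeight s w τ r i * (q i - r i) := by
        rw [mul_sum]
        refine sum_congr rfl fun i _ ↦ ?_
        field_simp

theorem exp_neg_div_le_partitionFunction {b : ℝ} (hτ : 0 < τ) (hw : ∀ i ∈ s, 0 ≤ w i)
    (hw_sum : ∑ i ∈ s, w i = 1) (hq : ∀ i ∈ s, q i ≤ b) :
    exp (-b / τ) ≤ partitionFunction s w τ q :=
  calc exp (-b / τ) = ∑ i ∈ s, w i * exp (-b / τ) := by rw [← sum_mul, hw_sum, one_mul]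
    _ ≤ partitionFunction s w τ q := sum_le_sum fun i hi ↦ by
        have := hw i hi
        have := hq i hi
        gcongr

theorem gibbsWeight_le_exp_mul (hτ : 0 < τ) (hw : ∀ i ∈ s, 0 ≤ w i) (hw_sum : ∑ i ∈ s, w i = 1)
    {i : ι} (hi : i ∈ s) (hq : ∀ j ∈ s, q j - q i ≤ δ) :
    gibbsWeight s w τ q i ≤ exp (δ / τ) * w i := by
  have hZ : exp (-(δ + q i) / τ) ≤ partitionFunction s w τ q :=
    exp_neg_div_le_partitionFunction hτ hw hw_sum fun j hj ↦ sub_le_iff_le_add.1 (hq j hj)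
  rw [gibbsWeight, div_le_iff₀ ((exp_pos _).trans_le hZ)]
  calc w i * exp (-q i / τ) = exp (δ / τ) * w i * exp (-(δ + q i) / τ) := by
        rw [mul_right_comm, ← exp_add, mul_comm]
        ring_nf
    _ ≤ exp (δ / τ) * w i * partitionFunction s w τ q :=
        mul_le_mul_of_nonneg_left hZ (mul_nonneg (exp_pos _).le (hw i hi))

theorem softMin_sub_le_exp_mul_sum (hτ : 0 < τ) (hw : ∀ i ∈ s, 0 ≤ w i)
    (hw_sum : ∑ i ∈ s, w i = 1) (hr : ∀ i ∈ s, ∀ j ∈ s, r i - r j ≤ δ) :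
    softMin s w τ q - softMin s w τ r ≤ exp (δ / τ) * ∑ i ∈ s, w i * |q i - r i| :=
  calc softMin s w τ q - softMin s w τ r
      ≤ ∑ i ∈ s, gibbsWeight s w τ r i * (q i - r i) :=
        softMin_sub_le_sum_gibbsWeight_mul hτ hw (hw_sum ▸ one_pos)
    _ ≤ ∑ i ∈ s, exp (δ / τ) * w i * |q i - r i| := sum_le_sum fun i hi ↦
        (mul_le_mul_of_nonneg_left (le_abs_self _) (gibbsWeight_nonneg hw hi)).trans
          (mul_le_mul_of_nonneg_right
            (gibbsWeight_le_exp_mul hτ hw hw_sum hi fun j hj ↦ hr j hj i hi) (abs_nonneg _))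
    _ = exp (δ / τ) * ∑ i ∈ s, w i * |q i - r i| := by simp only [mul_sum, mul_assoc]

theorem stmt_2_general (hτ : 0 < τ) (hw : ∀ i ∈ s, 0 ≤ w i) (hw_sum : ∑ i ∈ s, w i = 1)
    (hq : ∀ i ∈ s, ∀ j ∈ s, q i - q j ≤ δ) (hr : ∀ i ∈ s, ∀ j ∈ s, r i - r j ≤ δ) :
    |softMin s w τ q - softMin s w τ r| ≤ exp (δ / τ) * ∑ i ∈ s, w i * |q i - r i| := by
  refine abs_sub_le_iff.2 ⟨softMin_sub_le_exp_mul_sum hτ hw hw_sum hr, ?_⟩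
  simpa only [abs_sub_comm] using softMin_sub_le_exp_mul_sum (q := r) hτ hw hw_sum hq

end

/-- **Finite-sample Lipschitz property of the plain Monte Carlo soft-minimum.**
For `q₁,…,q_K, r₁,…,r_K ∈ [α, β]`,
`|-τ log((1/K) Σ exp(-q_k/τ)) + τ log((1/K) Σ exp(-r_k/τ))|
  ≤ exp((β-α)/τ) · (1/K) Σ |q_k - r_k|`. -/
theorem stmt_2 (τ α β : ℝ) (hτ : 0 < τ) (hαβ : α ≤ β)
    (K : ℕ) (hK : 0 < K) (q r : ℕ → ℝ)
    (hq : ∀ k ∈ Finset.Icc 1 K, q k ∈ Set.Icc α β)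
    (hr : ∀ k ∈ Finset.Icc 1 K, r k ∈ Set.Icc α β) :
    |(-τ * Real.log ((1 / (K : ℝ)) * ∑ k ∈ Finset.Icc 1 K, Real.exp (-q k / τ))) +
      τ * Real.log ((1 / (K : ℝ)) * ∑ k ∈ Finset.Icc 1 K, Real.exp (-r k / τ))| ≤
      Real.exp ((β - α) / τ) * ((1 / (K : ℝ)) * ∑ k ∈ Finset.Icc 1 K, |q k - r k|) := by
  have uniform_sum : ∑ _k ∈ Finset.Icc 1 K, 1 / (K : ℝ) = 1 := by
    simp [hK.ne']
  simpa only [softMin, partitionFunction, ← mul_sum, neg_mul, sub_neg_eq_add] using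
    stmt_2_general hτ (fun _ _ ↦ by positivity) uniform_sum
      (fun i hi j hj ↦ sub_le_sub (hq i hi).2 (hq j hj).1)
      (fun i hi j hj ↦ sub_le_sub (hr i hi).2 (hr j hj).1)
end

section
/- Let τ > 0 and 0 < A < B. There exists a constant C > 0 depending only on A and B such that for all real numbers a, b, a′, b′, m, m′ ∈ [A, B], setting c = (a + b)/2, c′ = (a′ + b′)/2 and g(x) = −τ log x, one has |g(c) − g(c′) − (1/2)[g(a) − g(a′) + g(b) − g(b′)]| ≤ τ C Σ_{x ∈ {a, b, c}} [ (|x − x′| + |m − m′|)(x − m)² + |(x − m + x′ − m′)(x − x′ − (m − m′))| ], where for x = a, b, c the symbol x′ denotes a′, b′, c′ respectively. -/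
/-!
Put `R m x = g x - g m - g' m * (x - m)`. Since affine functions contribute nothing to
`g c - (g a + g b) / 2`, the function `g` may be replaced by `R m` at `a, b, c` and by `R m'` at
`a', b', c'`; it remains to bound `R m x - R m' x'`. This is the first-order Taylor remainder at
`1`, expanded at `0`, of `t ↦ g (m + t (x - m)) - g (m' + t (x' - m'))`. By Lagrange's form,
applied once to this difference, it equals `(g'' p * (x - m) ^ 2 - g'' p' * (x' - m') ^ 2) / 2`
where `p` and `p'` have the *same* parameter `t`, so that `|p - p'| ≤ |x - x'| + |m - m'|`.
Boundedness and Lipschitz continuity of `g''` finish the estimate.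
-/

open Set AffineMap
open scoped NNReal

/-- The first-order Taylor remainder of `f` at `x`, expanded at `m`, where `f'` plays the role of
the derivative of `f`. -/
def taylorRemainder (f f' : ℝ → ℝ) (m x : ℝ) : ℝ :=
  f x - f m - f' m * (x - m)

/-- The quantity controlling the difference of the Taylor remainders of a function at `x` and `x'`,
expanded at `m` and `m'` respectively. The second summand is `|(x - m) ^ 2 - (x' - m') ^ 2|`,
in factored form. -/
def deviation (m m' x x' : ℝ) : ℝ :=
  (|x - x'| + |m - m'|) * (x - m) ^ 2 + |(x - m + x' - m') * (x - x' - (m - m'))|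

/-- The difference, between the pairs `(a, b)` and `(a', b')`, of the antithetic corrections
`f ((a + b) / 2) - (f a + f b) / 2` of the Blanchet–Glynn estimator. -/
noncomputable def antitheticDiff (f : ℝ → ℝ) (a b a' b' : ℝ) : ℝ :=
  f ((a + b) / 2) - f ((a' + b') / 2) - (1 / 2) * ((f a - f a') + (f b - f b'))

section Taylor

variable {f f' f'' : ℝ → ℝ} {s : Set ℝ}

theorem exists_taylorRemainder_eq {a b : ℝ} (hab : a < b)
    (hf : ∀ t ∈ Icc a b, HasDerivWithinAt f (f' t) (Icc a b) t)
    (hf' : ∀ t ∈ Icc a b, HasDerivWithinAt f' (f'' t) (Icc a b) t) :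
    ∃ t ∈ Ioo a b, taylorRemainder f f' a b = f'' t / 2 * (b - a) ^ 2 := by
  have hunique := uniqueDiffOn_Icc hab
  have hderiv : EqOn (derivWithin f (Icc a b)) f' (Icc a b) := fun t ht ↦
    (hf t ht).derivWithin (hunique t ht)
  have hdiff : DifferentiableOn ℝ (derivWithin f (Icc a b)) (Icc a b) :=
    DifferentiableOn.congr (fun t ht ↦ (hf' t ht).differentiableWithinAt) hderiv
  have hcontDiff : ContDiffOn ℝ 1 f (Icc a b) :=
    (contDiffOn_one_iff_derivWithin hunique).2
      ⟨fun t ht ↦ (hf t ht).differentiableWithinAt, hdiff.continuousOn⟩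
  have hlagrange := taylor_mean_remainder_lagrange (f := f) (n := 1) hab.ne
  simp only [uIcc_of_lt hab, uIoo_of_lt hab, iteratedDerivWithin_one, Nat.cast_one] at hlagrange
  obtain ⟨t, ht, heq⟩ := hlagrange hcontDiff (hdiff.mono Ioo_subset_Icc_self)
  have htIcc := Ioo_subset_Icc_self ht
  have hsecond : iteratedDerivWithin 2 f (Icc a b) t = f'' t := by
    rw [iteratedDerivWithin_succ, iteratedDerivWithin_one,
      derivWithin_congr hderiv (hderiv htIcc), (hf' t htIcc).derivWithin (hunique t htIcc)]
  have hpoly : taylorWithinEval f 1 (Icc a b) a b = f a + f' a * (b - a) := by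
    simp [taylorWithinEval_succ, hderiv (left_mem_Icc.2 hab.le), mul_comm]
  refine ⟨t, ht, ?_⟩
  rw [hpoly, hsecond] at heq
  rw [taylorRemainder, sub_sub, heq, Nat.factorial_two, Nat.cast_two]
  ring

theorem hasDerivWithinAt_comp_lineMap (hs : Convex ℝ s)
    (hf : ∀ y ∈ s, HasDerivWithinAt f (f' y) s y) {m x : ℝ} (hm : m ∈ s) (hx : x ∈ s)
    {t : ℝ} (ht : t ∈ Icc (0 : ℝ) 1) :
    HasDerivWithinAt (fun t ↦ f (lineMap m x t)) (f' (lineMap m x t) * (x - m)) (Icc 0 1) t :=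
  (hf _ (hs.lineMap_mem hm hx ht)).comp t hasDerivWithinAt_lineMap
    fun _ hu ↦ hs.lineMap_mem hm hx hu

theorem exists_taylorRemainder_sub_eq (hs : Convex ℝ s)
    (hf : ∀ y ∈ s, HasDerivWithinAt f (f' y) s y)
    (hf' : ∀ y ∈ s, HasDerivWithinAt f' (f'' y) s y)
    {m m' x x' : ℝ} (hm : m ∈ s) (hm' : m' ∈ s) (hx : x ∈ s) (hx' : x' ∈ s) :
    ∃ t ∈ Ioo (0 : ℝ) 1, taylorRemainder f f' m x - taylorRemainder f f' m' x' =
      (f'' (lineMap m x t) * (x - m) ^ 2 - f'' (lineMap m' x' t) * (x' - m') ^ 2) / 2 := by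
  obtain ⟨t, ht, heq⟩ := exists_taylorRemainder_eq zero_lt_one
    (fun t ht ↦ (hasDerivWithinAt_comp_lineMap hs hf hm hx ht).sub
      (hasDerivWithinAt_comp_lineMap hs hf hm' hx' ht))
    (fun t ht ↦ ((hasDerivWithinAt_comp_lineMap hs hf' hm hx ht).mul_const (x - m)).sub
      ((hasDerivWithinAt_comp_lineMap hs hf' hm' hx' ht).mul_const (x' - m')))
  refine ⟨t, ht, ?_⟩
  simp only [taylorRemainder, Pi.sub_apply, lineMap_apply_zero, lineMap_apply_one] at heq ⊢
  linear_combination heq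

theorem abs_lineMap_sub_lineMap_le (m m' x x' : ℝ) {t : ℝ} (ht : t ∈ Icc (0 : ℝ) 1) :
    |lineMap m x t - lineMap m' x' t| ≤ |x - x'| + |m - m'| := by
  calc |lineMap m x t - lineMap m' x' t|
      = |t * (x - x') + (1 - t) * (m - m')| := by simp only [lineMap_apply_ring]; ring_nf
    _ ≤ t * |x - x'| + (1 - t) * |m - m'| := by
      refine (abs_add_le _ _).trans_eq ?_
      rw [abs_mul, abs_mul, abs_of_nonneg ht.1, abs_of_nonneg (sub_nonneg.2 ht.2)]
    _ ≤ |x - x'| + |m - m'| := by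
      gcongr
      · exact mul_le_of_le_one_left (abs_nonneg _) ht.2
      · exact mul_le_of_le_one_left (abs_nonneg _) (sub_le_self 1 ht.1)

theorem abs_taylorRemainder_sub_le (hs : Convex ℝ s)
    (hf : ∀ y ∈ s, HasDerivWithinAt f (f' y) s y)
    (hf' : ∀ y ∈ s, HasDerivWithinAt f' (f'' y) s y)
    {M : ℝ} (hM : ∀ y ∈ s, |f'' y| ≤ M) {L : ℝ≥0} (hL : LipschitzOnWith L f'' s)
    {m m' x x' : ℝ} (hm : m ∈ s) (hm' : m' ∈ s) (hx : x ∈ s) (hx' : x' ∈ s) :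
    |taylorRemainder f f' m x - taylorRemainder f f' m' x'| ≤
      max M L / 2 * deviation m m' x x' := by
  obtain ⟨t, ht, heq⟩ := exists_taylorRemainder_sub_eq hs hf hf' hm hm' hx hx'
  have htIcc := Ioo_subset_Icc_self ht
  set p := lineMap m x t
  set p' := lineMap m' x' t
  have hp : p ∈ s := hs.lineMap_mem hm hx htIcc
  have hp' : p' ∈ s := hs.lineMap_mem hm' hx' htIcc
  have hlip : |f'' p - f'' p'| ≤ max M L * (|x - x'| + |m - m'|) :=
    (hL.norm_sub_le hp hp').trans <| by
      gcongr
      · exact le_max_right M L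
      · exact abs_lineMap_sub_lineMap_le m m' x x' htIcc
  calc |taylorRemainder f f' m x - taylorRemainder f f' m' x'|
      = |(f'' p - f'' p') * (x - m) ^ 2 +
          f'' p' * ((x - m + x' - m') * (x - x' - (m - m')))| / 2 := by
        rw [heq, abs_div, abs_two]
        ring_nf
    _ ≤ (|f'' p - f'' p'| * (x - m) ^ 2 +
          |f'' p'| * |(x - m + x' - m') * (x - x' - (m - m'))|) / 2 := by
        gcongr
        refine (abs_add_le _ _).trans_eq ?_
        rw [abs_mul, abs_mul (f'' p'), abs_of_nonneg (sq_nonneg (x - m))]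
    _ ≤ (max M L * (|x - x'| + |m - m'|) * (x - m) ^ 2 +
          max M L * |(x - m + x' - m') * (x - x' - (m - m'))|) / 2 := by
        gcongr
        exact (hM p' hp').trans (le_max_left M L)
    _ = max M L / 2 * deviation m m' x x' := by
        unfold deviation
        ring

theorem antitheticDiff_const_mul (r : ℝ) (f : ℝ → ℝ) (a b a' b' : ℝ) :
    antitheticDiff (fun x ↦ r * f x) a b a' b' = r * antitheticDiff f a b a' b' := by
  unfold antitheticDiff
  ring

theorem antitheticDiff_eq_taylorRemainder (f f' : ℝ → ℝ) (a b a' b' m m' : ℝ) :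
    antitheticDiff f a b a' b' =
      (taylorRemainder f f' m ((a + b) / 2) - taylorRemainder f f' m' ((a' + b') / 2)) -
        (1 / 2) * ((taylorRemainder f f' m a - taylorRemainder f f' m' a') +
          (taylorRemainder f f' m b - taylorRemainder f f' m' b')) := by
  unfold antitheticDiff taylorRemainder
  ring

theorem abs_antitheticDiff_le (hs : Convex ℝ s)
    (hf : ∀ y ∈ s, HasDerivWithinAt f (f' y) s y)
    (hf' : ∀ y ∈ s, HasDerivWithinAt f' (f'' y) s y)
    {M : ℝ} (hM : ∀ y ∈ s, |f'' y| ≤ M) {L : ℝ≥0} (hL : LipschitzOnWith L f'' s)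
    {a b a' b' m m' : ℝ} (ha : a ∈ s) (hb : b ∈ s) (ha' : a' ∈ s) (hb' : b' ∈ s)
    (hm : m ∈ s) (hm' : m' ∈ s) :
    |antitheticDiff f a b a' b'| ≤
      max M L / 2 * (deviation m m' a a' + deviation m m' b b' +
        deviation m m' ((a + b) / 2) ((a' + b') / 2)) := by
  have hmid {y z : ℝ} (hy : y ∈ s) (hz : z ∈ s) : (y + z) / 2 ∈ s := by
    simpa [midpoint_eq_smul_add, div_eq_inv_mul] using hs.midpoint_mem hy hz
  have hremainder {x x' : ℝ} (hx : x ∈ s) (hx' : x' ∈ s) :=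
    abs_taylorRemainder_sub_le hs hf hf' hM hL hm hm' hx hx'
  have hRa := hremainder ha ha'
  have hRb := hremainder hb hb'
  have hRc := hremainder (hmid ha hb) (hmid ha' hb')
  rw [antitheticDiff_eq_taylorRemainder f f' a b a' b' m m', mul_add, mul_add]
  rw [abs_le] at hRa hRb hRc ⊢
  constructor <;> linarith

end Taylor

theorem lipschitzOnWith_neg_inv_sq_Ici {A : ℝ} (hA : 0 < A) :
    LipschitzOnWith (2 / A ^ 3).toNNReal (fun y : ℝ ↦ -(y ^ 2)⁻¹) (Ici A) := by
  have hderiv : ∀ y ∈ Ici A, HasDerivWithinAt (fun y : ℝ ↦ -(y ^ 2)⁻¹) (2 / y ^ 3) (Ici A) y := by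
    intro y hy
    have hy0 : y ≠ 0 := (hA.trans_le hy).ne'
    have hinv := (hasDerivAt_pow 2 y).fun_inv (pow_ne_zero 2 hy0)
    refine (hinv.fun_neg.congr_deriv ?_).hasDerivWithinAt
    field_simp
    ring
  have hbound : ∀ y ∈ Ici A, ‖2 / y ^ 3‖ ≤ 2 / A ^ 3 := by
    intro y hy
    have hy0 : 0 < y := hA.trans_le hy
    rw [Real.norm_of_nonneg (by positivity)]
    gcongr
    exact hy
  refine LipschitzOnWith.of_dist_le' fun x hx y hy ↦ ?_
  simpa only [dist_eq_norm] using
    (convex_Ici A).norm_image_sub_le_of_norm_hasDerivWithin_le hderiv hbound hy hx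

theorem abs_antitheticDiff_log_le {A : ℝ} (hA : 0 < A) {a b a' b' m m' : ℝ}
    (ha : A ≤ a) (hb : A ≤ b) (ha' : A ≤ a') (hb' : A ≤ b') (hm : A ≤ m) (hm' : A ≤ m') :
    |antitheticDiff Real.log a b a' b'| ≤
      max (1 / A ^ 2) (2 / A ^ 3) / 2 *
        (deviation m m' a a' + deviation m m' b b' +
          deviation m m' ((a + b) / 2) ((a' + b') / 2)) := by
  have hne {y : ℝ} (hy : A ≤ y) : y ≠ 0 := (hA.trans_le hy).ne'
  have hbound : ∀ y ∈ Ici A, |-(y ^ 2)⁻¹| ≤ 1 / A ^ 2 := by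
    intro y hy
    rw [abs_neg, abs_of_nonneg (by positivity), ← one_div]
    gcongr
    exact hy
  have hgap := abs_antitheticDiff_le (convex_Ici A)
    (fun y hy ↦ (Real.hasDerivAt_log (hne hy)).hasDerivWithinAt)
    (fun y hy ↦ hasDerivWithinAt_inv (hne hy) _)
    hbound (lipschitzOnWith_neg_inv_sq_Ici hA) ha hb ha' hb' hm hm'
  rwa [Real.coe_toNNReal _ (by positivity)] at hgap

theorem stmt_9_general {A : ℝ} (hA : 0 < A) (τ : ℝ) {a b a' b' m m' : ℝ}
    (ha : A ≤ a) (hb : A ≤ b) (ha' : A ≤ a') (hb' : A ≤ b') (hm : A ≤ m) (hm' : A ≤ m') :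
    |antitheticDiff (fun x ↦ -τ * Real.log x) a b a' b'| ≤
      |τ| * (max (1 / A ^ 2) (2 / A ^ 3) / 2) *
        (deviation m m' a a' + deviation m m' b b' +
          deviation m m' ((a + b) / 2) ((a' + b') / 2)) := by
  rw [antitheticDiff_const_mul, abs_mul, abs_neg, mul_assoc]
  gcongr
  exact abs_antitheticDiff_log_le hA ha hb ha' hb' hm hm'

/-- **Second-order Taylor estimate for `g(x) = -τ log x` (antithetic difference
bound).** There is a constant `C > 0` depending only on `A` and `B` such that for all
`τ > 0` and all `a, b, a', b', m, m' ∈ [A, B]`, with `c = (a+b)/2`, `c' = (a'+b')/2`,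
`|g(c) - g(c') - (1/2)[g(a) - g(a') + g(b) - g(b')]|
  ≤ τ C Σ_{x ∈ {a,b,c}} [(|x - x'| + |m - m'|)(x - m)²
      + |(x - m + x' - m')(x - x' - (m - m'))|]`. -/
theorem stmt_9 (A B : ℝ) (hA : 0 < A) (hAB : A < B) :
    ∃ C : ℝ, 0 < C ∧
      ∀ τ : ℝ, 0 < τ →
      ∀ a b a' b' m m' : ℝ,
        a ∈ Set.Icc A B → b ∈ Set.Icc A B → a' ∈ Set.Icc A B → b' ∈ Set.Icc A B →
        m ∈ Set.Icc A B → m' ∈ Set.Icc A B →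
        |(-τ * Real.log ((a + b) / 2)) - (-τ * Real.log ((a' + b') / 2)) -
            (1 / 2) * (((-τ * Real.log a) - (-τ * Real.log a')) +
              ((-τ * Real.log b) - (-τ * Real.log b')))| ≤
          τ * C *
            (((|a - a'| + |m - m'|) * (a - m) ^ 2 +
                |(a - m + a' - m') * (a - a' - (m - m'))|) +
              ((|b - b'| + |m - m'|) * (b - m) ^ 2 +
                |(b - m + b' - m') * (b - b' - (m - m'))|) +
              ((|(a + b) / 2 - (a' + b') / 2| + |m - m'|) * ((a + b) / 2 - m) ^ 2 +
                |((a + b) / 2 - m + (a' + b') / 2 - m') *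
                  ((a + b) / 2 - (a' + b') / 2 - (m - m'))|)) := by
  refine ⟨max (1 / A ^ 2) (2 / A ^ 3) / 2, by positivity, ?_⟩
  intro τ hτ a b a' b' m m' ha hb ha' hb' hm hm'
  simpa only [abs_of_pos hτ, antitheticDiff, deviation] using
    stmt_9_general hA τ ha.1 hb.1 ha'.1 hb'.1 hm.1 hm'.1
end

section
/- Let M, K be integers with M ≥ 2 and K ≥ 1, and let (u_n)_{n∈ℕ} be a sequence of nonnegative real numbers satisfying, for all n ∈ ℕ, u_n ≤ (K + 1)(M^{n+1} − 1)/(M − 1) + K(1 + 1/M) Σ_{l=0}^{n−1} M^{n−l} u_l. Then for all n ∈ ℕ, u_n ≤ (K + 1) · (M/(M − 1)) · (1 + K(1 + 1/M))ⁿ · Mⁿ. -/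
/-!
Dividing by `M ^ n` turns the convolution `∑ M ^ (n - l) * u l` into a plain sum of the normalized
terms `u l / M ^ l`, while the normalized forcing term is at most the constant
`(K + 1) * (M / (M - 1))`. The summation form of the discrete Grönwall inequality then bounds
`u n / M ^ n`; that form follows from the one-step form, which the right-hand sides
`c + ∑ l ∈ range n, b l * v l` satisfy.
-/

open Finset

theorem discrete_gronwall_of_le_add_sum {R : Type*} [CommSemiring R] [PartialOrder R]
    [IsOrderedRing R] {v b : ℕ → R} {c : R} (hb : ∀ n, 0 ≤ b n)
    (hv : ∀ n, v n ≤ c + ∑ l ∈ range n, b l * v l) (n : ℕ) :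
    v n ≤ c * ∏ l ∈ range n, (1 + b l) := by
  let S : ℕ → R := fun n ↦ c + ∑ l ∈ range n, b l * v l
  have S_succ_le (n : ℕ) : S (n + 1) ≤ (1 + b n) * S n + 0 :=
    calc S (n + 1) = S n + b n * v n := by simp only [S, sum_range_succ, add_assoc]
      _ ≤ S n + b n * S n := by gcongr; exacts [hb n, hv n]
      _ = (1 + b n) * S n + 0 := by ring
  have S_le := discrete_gronwall_prod_general (fun n _ ↦ S_succ_le n)
    (fun n _ ↦ add_nonneg zero_le_one (hb n)) n.zero_le
  exact (hv n).trans (by simpa [S] using S_le)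

section Field

variable {𝕜 : Type*} [Field 𝕜] [LinearOrder 𝕜] [IsStrictOrderedRing 𝕜]

theorem discrete_gronwall_of_le_add_sum_pow_mul {M a : 𝕜} {u q : ℕ → 𝕜} (hM : 0 < M)
    (hq : ∀ n, 0 ≤ q n)
    (hu : ∀ n, u n ≤ a * M ^ n + ∑ l ∈ range n, q l * (M ^ (n - l) * u l)) (n : ℕ) :
    u n ≤ a * (∏ l ∈ range n, (1 + q l)) * M ^ n := by
  have normalized_le (n : ℕ) : u n / M ^ n ≤ a + ∑ l ∈ range n, q l * (u l / M ^ l) := by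
    rw [div_le_iff₀ (pow_pos hM n), add_mul, sum_mul]
    refine (hu n).trans_eq (congrArg _ (sum_congr rfl fun l hl ↦ ?_))
    rw [pow_sub₀ M hM.ne' (mem_range.mp hl).le]
    ring
  exact (div_le_iff₀ (pow_pos hM n)).mp (discrete_gronwall_of_le_add_sum hq normalized_le n)

theorem pow_succ_sub_one_div_sub_one_le {M : 𝕜} (hM : 1 < M) (n : ℕ) :
    (M ^ (n + 1) - 1) / (M - 1) ≤ M / (M - 1) * M ^ n := by
  have : 0 < M - 1 := sub_pos.mpr hM
  calc (M ^ (n + 1) - 1) / (M - 1) ≤ M ^ (n + 1) / (M - 1) := by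
        gcongr
        exact sub_le_self _ zero_le_one
    _ = M / (M - 1) * M ^ n := by ring

theorem stmt_14_general {M K : 𝕜} (hM : 1 < M) (hK : 0 ≤ K) {u : ℕ → 𝕜}
    (hrec : ∀ n, u n ≤ (K + 1) * (M ^ (n + 1) - 1) / (M - 1) +
      K * (1 + 1 / M) * ∑ l ∈ range n, M ^ (n - l) * u l) (n : ℕ) :
    u n ≤ (K + 1) * (M / (M - 1)) * (1 + K * (1 + 1 / M)) ^ n * M ^ n := by
  have hM₀ : 0 < M := zero_lt_one.trans hM
  have forcing_le (n : ℕ) :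
      (K + 1) * (M ^ (n + 1) - 1) / (M - 1) ≤ (K + 1) * (M / (M - 1)) * M ^ n := by
    rw [mul_div_assoc, mul_assoc]
    gcongr
    exact pow_succ_sub_one_div_sub_one_le hM n
  have weighted_le (n : ℕ) : u n ≤ (K + 1) * (M / (M - 1)) * M ^ n +
      ∑ l ∈ range n, K * (1 + 1 / M) * (M ^ (n - l) * u l) := by
    rw [← mul_sum]
    exact (hrec n).trans (by gcongr; exact forcing_le n)
  have bound := discrete_gronwall_of_le_add_sum_pow_mul hM₀ (fun _ ↦ by positivity) weighted_le n
  rwa [prod_const, card_range] at bound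

end Field

/-- **Sample-complexity recursion for the MLMC estimator.** If `M ≥ 2`, `K ≥ 1` and
the nonnegative sequence `(u_n)` satisfies
`u_n ≤ (K+1)(M^{n+1} - 1)/(M-1) + K(1 + 1/M) Σ_{l=0}^{n-1} M^{n-l} u_l` for all `n`,
then `u_n ≤ (K+1) · (M/(M-1)) · (1 + K(1 + 1/M))ⁿ · Mⁿ` for all `n`. -/
theorem stmt_14 (M K : ℕ) (hM : 2 ≤ M) (hK : 1 ≤ K)
    (u : ℕ → ℝ) (hu : ∀ n, 0 ≤ u n)
    (hrec : ∀ n, u n ≤ ((K : ℝ) + 1) * ((M : ℝ) ^ (n + 1) - 1) / ((M : ℝ) - 1) +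
      (K : ℝ) * (1 + 1 / (M : ℝ)) * ∑ l ∈ Finset.range n, (M : ℝ) ^ (n - l) * u l) :
    ∀ n, u n ≤ ((K : ℝ) + 1) * ((M : ℝ) / ((M : ℝ) - 1)) *
      (1 + (K : ℝ) * (1 + 1 / (M : ℝ))) ^ n * (M : ℝ) ^ n :=
  stmt_14_general (Nat.one_lt_cast.mpr hM) K.cast_nonneg hrec
end
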